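/- arXiv:math/0702664 — 10 statements merged into one kernel-verified Lean document; each statement's English description precedes it below -/
import Mathlib

section
/- For every λ ∈ ℝ, the maps C_{λ,λ}(X)(f) = X′f, C_{λ,λ+2}(X)(f) = X‴f + 2X″f′ and C_{λ,λ+3}(X)(f) = X‴f′ + X″f″ are 1-cocycles on Vect(1) with values in D_{λ,λ}, D_{λ,λ+2} and D_{λ,λ+3} respectively; and the maps C_{0,1}(X)(f) = X″f and C̃_{0,1}(X)(f) = (X′f)′ are 1-cocycles with values in D_{0,1}. -/
noncomputable section

/-- Polynomials over ℝ, identified with polynomial vector fields / densities on the line. -/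
abbrev P : Type := Polynomial ℝ

/-- Derivative d/dx. -/
def D : P → P := fun f => Polynomial.derivative f

/-- Iterated derivative: `Dk k f = f^(k)`. -/
def Dk (k : ℕ) : P → P := D^[k]

/-- Lie bracket on Vect(1): [X,Y] = XY' - X'Y. -/
def br (X Y : P) : P := X * D Y - D X * Y

/-- Action of the vector field X on λ-densities: `L_X^λ f = X f' + λ X' f`. -/
def Lw (l : ℝ) (X f : P) : P := X * D f + Polynomial.C l * D X * f

/-- Action on operators from F_ν to F_μ: `L_X^{ν,μ}(A) = L_X^μ ∘ A - A ∘ L_X^ν`. -/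
def LD (nu mu : ℝ) (X : P) (A : P → P) (f : P) : P := Lw mu X (A f) - A (Lw nu X f)

/-- 1-cocycle condition with values in D_{ν,μ}. -/
def IsCocycle1 (nu mu : ℝ) (c : P → P → P) : Prop :=
  ∀ X Y f, c (br X Y) f = LD nu mu X (c Y) f - LD nu mu Y (c X) f

/-- 2-cocycle condition with values in D_{ν,μ}. -/
def IsCocycle2 (nu mu : ℝ) (o : P → P → P → P) : Prop :=
  ∀ X Y Z f,
    LD nu mu X (o Y Z) f - LD nu mu Y (o X Z) f + LD nu mu Z (o X Y) f
      - o (br X Y) Z f + o (br X Z) Y f - o (br Y Z) X f = 0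

/-- Cup product of 1-cochains: `[[C₁,C₂]](X,Y) = C₁(X)∘C₂(Y) - C₁(Y)∘C₂(X)`. -/
def cup (c₁ c₂ : P → P → P) (X Y f : P) : P := c₁ X (c₂ Y f) - c₁ Y (c₂ X f)

/-- Coboundary of a 1-cochain b with values in D_{ν,μ}. -/
def cob (nu mu : ℝ) (b : P → P → P) (X Y f : P) : P :=
  LD nu mu X (b Y) f - LD nu mu Y (b X) f - b (br X Y) f


/-- the maps `C_{λ,λ}`, `C_{λ,λ+2}`, `C_{λ,λ+3}`, `C_{0,1}` and `C̃_{0,1}`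
are 1-cocycles on Vect(1). -/
theorem one_cocycles_low_order (l : ℝ) :
    IsCocycle1 l l (fun X f => D X * f) ∧
    IsCocycle1 l (l + 2) (fun X f => Dk 3 X * f + 2 * Dk 2 X * D f) ∧
    IsCocycle1 l (l + 3) (fun X f => Dk 3 X * D f + Dk 2 X * Dk 2 f) ∧
    IsCocycle1 0 1 (fun X f => Dk 2 X * f) ∧
    IsCocycle1 0 1 (fun X f => D (D X * f)) := by
  refine ⟨?_, ?_, ?_, ?_, ?_⟩ <;> intro X Y f <;>
  simp only [LD, Lw, br, Dk, D, Function.iterate_succ, Function.iterate_zero, Function.comp,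
    id, Polynomial.derivative_mul, Polynomial.derivative_add, Polynomial.derivative_sub,
    Polynomial.derivative_C, Polynomial.C_add, Polynomial.C_0, Polynomial.C_1,
    show (Polynomial.C (2:ℝ)) = 2 from rfl, show (Polynomial.C (3:ℝ)) = 3 from rfl,
    Polynomial.derivative_ofNat, Polynomial.derivative_one, Polynomial.derivative_zero] <;>
  ring
end
end

section
/- For every λ ∈ ℝ, the map C_{λ,λ+4}(X)(f) = −λX^(5)f + X^(4)f′ − 6X‴f″ − 4X″f‴ is a 1-cocycle on Vect(1) with values in D_{λ,λ+4}, i.e. C_{λ,λ+4}([X,Y]) = L_X^{λ,λ+4}(C_{λ,λ+4}(Y)) − L_Y^{λ,λ+4}(C_{λ,λ+4}(X)) for all X,Y ∈ ℝ[x]. -/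
noncomputable section

/-- The cocycle identity in any commutative ring with a derivation `d`
and a constant `l`. -/
theorem cocycle_aux {R : Type} [CommRing R] (d : R → R)
    (ha : ∀ a b, d (a + b) = d a + d b) (hs : ∀ a b, d (a - b) = d a - d b)
    (hm : ∀ a b, d (a * b) = d a * b + a * d b) (l : R) (hl : d l = 0) (X Y f : R) :
    -l * d (d (d (d (d (X * d Y - d X * Y))))) * f
        + d (d (d (d (X * d Y - d X * Y)))) * d f
        - 6 * d (d (d (X * d Y - d X * Y))) * d (d f)
        - 4 * d (d (X * d Y - d X * Y)) * d (d (d f)) =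
      (X * d (-l * d (d (d (d (d Y)))) * f + d (d (d (d Y))) * d f
            - 6 * d (d (d Y)) * d (d f) - 4 * d (d Y) * d (d (d f)))
          + (l + 4) * d X * (-l * d (d (d (d (d Y)))) * f + d (d (d (d Y))) * d f
            - 6 * d (d (d Y)) * d (d f) - 4 * d (d Y) * d (d (d f)))
          - (-l * d (d (d (d (d Y)))) * (X * d f + l * d X * f)
            + d (d (d (d Y))) * d (X * d f + l * d X * f)
            - 6 * d (d (d Y)) * d (d (X * d f + l * d X * f))
            - 4 * d (d Y) * d (d (d (X * d f + l * d X * f)))))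
      - (Y * d (-l * d (d (d (d (d X)))) * f + d (d (d (d X))) * d f
            - 6 * d (d (d X)) * d (d f) - 4 * d (d X) * d (d (d f)))
          + (l + 4) * d Y * (-l * d (d (d (d (d X)))) * f + d (d (d (d X))) * d f
            - 6 * d (d (d X)) * d (d f) - 4 * d (d X) * d (d (d f)))
          - (-l * d (d (d (d (d X)))) * (Y * d f + l * d Y * f)
            + d (d (d (d X))) * d (Y * d f + l * d Y * f)
            - 6 * d (d (d X)) * d (d (Y * d f + l * d Y * f))
            - 4 * d (d X) * d (d (d (Y * d f + l * d Y * f))))) := by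
  have h0 : d 0 = 0 := by simpa using hs 0 0
  have h1 : d 1 = 0 := by simpa using hm 1 1
  have h2 : d 2 = 0 := by rw [← one_add_one_eq_two, ha, h1, add_zero]
  have h4 : d 4 = 0 := by rw [← two_add_two_eq_four, ha, h2, add_zero]
  have h6 : d 6 = 0 := by
    rw [show (6 : R) = 4 + 2 by norm_num, ha, h2, h4, add_zero]
  have hn : d (-l) = 0 := by rw [← zero_sub, hs, hl, h0, sub_zero]
  simp only [ha, hs, hm, hl, hn, h4, h6, zero_mul, zero_add]
  ring

/-- `C_{λ,λ+4}` is a 1-cocycle on Vect(1) with values in D_{λ,λ+4}. -/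
theorem one_cocycle_order_four (l : ℝ) :
    IsCocycle1 l (l + 4)
      (fun X f => -(Polynomial.C l) * Dk 5 X * f + Dk 4 X * D f
        - 6 * Dk 3 X * Dk 2 f - 4 * Dk 2 X * Dk 3 f) := by
  intro X Y f
  have h4 : Polynomial.C (l + 4) = Polynomial.C l + 4 := by
    rw [Polynomial.C_add]
    exact congrArg _ (map_ofNat Polynomial.C 4)
  simp only [LD, Lw, br, Dk, Function.iterate_succ, Function.iterate_zero, Function.comp_apply,
    id_eq, h4]
  exact cocycle_aux D (fun a b => Polynomial.derivative_add) (fun a b => Polynomial.derivative_sub)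
    (fun a b => Polynomial.derivative_mul) (Polynomial.C l) Polynomial.derivative_C X Y f
end
end

section
/- The map C_{0,5}(X)(f) = 2X^(5)f′ − 5X^(4)f″ + 10X‴f‴ + 5X″f^(4) is a 1-cocycle on Vect(1) with values in D_{0,5}, and the map C_{−4,1}(X)(f) = 12X^(6)f + 22X^(5)f′ + 5X^(4)f″ − 10X‴f‴ − 5X″f^(4) is a 1-cocycle with values in D_{−4,1}. -/
noncomputable section

/-- `C_{0,5}` and `C_{-4,1}` are 1-cocycles on Vect(1). -/
theorem one_cocycles_order_five :
    IsCocycle1 0 5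
      (fun X f => 2 * Dk 5 X * D f - 5 * Dk 4 X * Dk 2 f
        + 10 * Dk 3 X * Dk 3 f + 5 * Dk 2 X * Dk 4 f) ∧
    IsCocycle1 (-4) 1
      (fun X f => 12 * Dk 6 X * f + 22 * Dk 5 X * D f + 5 * Dk 4 X * Dk 2 f
        - 10 * Dk 3 X * Dk 3 f - 5 * Dk 2 X * Dk 4 f) := by
  have d2 : ∀ f, Dk 2 f = D (D f) := fun _ => rfl
  have d3 : ∀ f, Dk 3 f = D (D (D f)) := fun _ => rfl
  have d4 : ∀ f, Dk 4 f = D (D (D (D f))) := fun _ => rfl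
  have d5 : ∀ f, Dk 5 f = D (D (D (D (D f)))) := fun _ => rfl
  have d6 : ∀ f, Dk 6 f = D (D (D (D (D (D f))))) := fun _ => rfl
  have ha : ∀ f g, D (f + g) = D f + D g := fun f g => by simp [D]
  have hs : ∀ f g, D (f - g) = D f - D g := fun f g => by simp [D]
  have hm : ∀ f g, D (f * g) = D f * g + f * D g := fun f g => by simp [D]
  have h4 : D 4 = 0 := Polynomial.derivative_ofNat 4
  have hn4 : ∀ f, D (-f) = - D f := fun f => by simp [D]
  have hz : D 0 = 0 := by simp [D]
  have hO : ∀ (n : ℕ) [n.AtLeastTwo], D (OfNat.ofNat n) = 0 :=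
    fun n _ => Polynomial.derivative_ofNat n
  have c5 : (Polynomial.C (5:ℝ)) = 5 := rfl
  have c4 : (Polynomial.C (-4:ℝ)) = -4 := by rw [Polynomial.C_neg]; rfl
  constructor
  · intro X Y f
    simp only [LD, Lw, br, d2, d3, d4, d5, d6, ha, hs, hm, hn4, hz, hO, h4, c5, c4,
      Polynomial.C_0, zero_mul, mul_zero, add_zero, zero_add]
    ring
  · intro X Y f
    simp only [LD, Lw, br, d2, d3, d4, d5, d6, ha, hs, hm, hn4, hz, hO, h4, c5, c4,
      Polynomial.C_1, neg_mul, one_mul, neg_zero, zero_mul, mul_zero, add_zero, zero_add]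
    ring
end
end

section
/- Let a₁ = −(5+√19)/2, α₁ = −(22+5√19)/4, β₁ = (31+7√19)/2, γ₁ = (25+7√19)/2, and let a₂, α₂, β₂, γ₂ be obtained from these by replacing √19 with −√19. Then for i = 1, 2 the map C_{aᵢ,aᵢ+6}(X)(f) = αᵢX^(7)f − βᵢX^(6)f′ − γᵢX^(5)f″ − 5X^(4)f‴ + 5X‴f^(4) + 2X″f^(5) is a 1-cocycle on Vect(1) with values in D_{aᵢ,aᵢ+6}. -/
noncomputable section

theorem D_add (f g : P) : D (f + g) = D f + D g := by simp [D]

theorem D_sub (f g : P) : D (f - g) = D f - D g := by simp [D]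

theorem D_neg (f : P) : D (-f) = -D f := by simp [D]

theorem D_mul (f g : P) : D (f * g) = D f * g + f * D g := by simp [D]

theorem D_C (a : ℝ) : D (Polynomial.C a) = 0 := by simp [D]

theorem D_ofNat (n : ℕ) [n.AtLeastTwo] : D (OfNat.ofNat n : P) = 0 := by simp [D]

set_option maxHeartbeats 4000000 in
/-- for `a = -(5±√19)/2` the map `C_{a,a+6}` is a 1-cocycle on Vect(1). -/
theorem one_cocycle_order_six (s : ℝ)
    (hs : s = Real.sqrt 19 ∨ s = -Real.sqrt 19) :
    IsCocycle1 (-(5 + s) / 2) (-(5 + s) / 2 + 6)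
      (fun X f => Polynomial.C (-(22 + 5 * s) / 4) * Dk 7 X * f
        - Polynomial.C ((31 + 7 * s) / 2) * Dk 6 X * D f
        - Polynomial.C ((25 + 7 * s) / 2) * Dk 5 X * Dk 2 f
        - 5 * Dk 4 X * Dk 3 f + 5 * Dk 3 X * Dk 4 f + 2 * Dk 2 X * Dk 5 f) := by
  have hs2 : s ^ 2 = 19 := by
    rcases hs with h | h <;> rw [h] <;> norm_num
  have cn : ∀ n : ℕ, [n.AtLeastTwo] → (OfNat.ofNat n : P) = Polynomial.C (OfNat.ofNat n : ℝ) :=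
    fun n _ => rfl
  obtain ⟨h, hh⟩ : ∃ h : P, h = Polynomial.C (-(5 + s) / 4) := ⟨_, rfl⟩
  have hq : 8 * h ^ 2 + 20 * h + 3 = 0 := by
    rw [hh]
    simp only [cn, ← Polynomial.C_mul, ← Polynomial.C_add, ← Polynomial.C_pow]
    rw [← Polynomial.C_0]; congr 1; linear_combination (1 / 2) * hs2
  have e2 : Polynomial.C (-(5 + s) / 2) = 2 * h := by
    rw [hh]; simp only [cn, ← Polynomial.C_mul]; congr 1; ring
  have e1 : Polynomial.C (-(5 + s) / 2 + 6) = 2 * h + 6 := by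
    rw [Polynomial.C_add, e2]; rfl
  have e3 : Polynomial.C (-(22 + 5 * s) / 4) = -(2 * h ^ 2) := by
    rw [hh]; simp only [cn, ← Polynomial.C_mul, ← Polynomial.C_pow, ← Polynomial.C_neg]
    congr 1; linear_combination (1 / 8) * hs2
  have e4 : Polynomial.C ((31 + 7 * s) / 2) = -(14 * h + 2) := by
    rw [hh]; simp only [cn, ← Polynomial.C_mul, ← Polynomial.C_add, ← Polynomial.C_neg]
    congr 1; ring
  have e5 : Polynomial.C ((25 + 7 * s) / 2) = -(14 * h + 5) := by
    rw [hh]; simp only [cn, ← Polynomial.C_mul, ← Polynomial.C_add, ← Polynomial.C_neg]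
    congr 1; ring
  have d2 : D (2 : P) = 0 := D_ofNat 2
  have d5 : D (5 : P) = 0 := D_ofNat 5
  intro X Y f
  simp only [LD, Lw, br, Dk, Function.iterate_succ, Function.iterate_zero, Function.comp, id,
    D_add, D_sub, D_mul, D_C, d2, d5, zero_mul, zero_add]
  rw [e1, e2, e3, e4, e5]
  clear e1 e2 e3 e4 e5 hh cn d2 d5
  generalize D X = X1
  generalize D X1 = X2
  generalize D X2 = X3
  generalize D X3 = X4
  generalize D X4 = X5
  generalize D X5 = X6
  generalize D X6 = X7
  generalize D X7 = X8
  generalize D X8 = X9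
  generalize D Y = Y1
  generalize D Y1 = Y2
  generalize D Y2 = Y3
  generalize D Y3 = Y4
  generalize D Y4 = Y5
  generalize D Y5 = Y6
  generalize D Y6 = Y7
  generalize D Y7 = Y8
  generalize D Y8 = Y9
  generalize D f = f1
  generalize D f1 = f2
  generalize D f2 = f3
  generalize D f3 = f4
  generalize D f4 = f5
  generalize D f5 = f6
  generalize D f6 = f7
  generalize D f7 = f8
  generalize D f8 = f9
  linear_combination ((7)*X2*Y5*f1 + (-7)*X5*Y2*f1) * hq
end
end

section
/- Define Ω_{0,1}(X,Y)(f) = (X′Y″ − X″Y′)f. Then Ω_{0,1} equals the cup product [[C_{1,1}, C_{0,1}]] (with C_{1,1} valued in D_{1,1} and C_{0,1} valued in D_{0,1}); it is a 2-cocycle on Vect(1) with values in D_{0,1}; and there exist no α₀, α₁, α₂ ∈ ℝ such that Ω_{0,1} = ∂b, where b(X)(f) = α₀X″f + α₁X′f′ + α₂Xf″. -/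
noncomputable section

/-- The 2-cocycle `Ω_{0,1}`. -/
def Om01 (X Y f : P) : P := (D X * Dk 2 Y - Dk 2 X * D Y) * f

/-- `Ω_{0,1}` is the cup product `[[C_{1,1},C_{0,1}]]`, it is a 2-cocycle
with values in `D_{0,1}`, and it is not the coboundary of any differential 1-cochain
of the form `b(X)(f) = α₀X″f + α₁X′f′ + α₂Xf″`. -/
theorem Om01_nontrivial_two_cocycle :
    (∀ X Y f : P, Om01 X Y f =
      cup (fun X f => D X * f) (fun X f => Dk 2 X * f) X Y f) ∧
    IsCocycle2 0 1 Om01 ∧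
    ¬ ∃ a0 a1 a2 : ℝ, ∀ X Y f : P, Om01 X Y f =
      cob 0 1 (fun X f => Polynomial.C a0 * Dk 2 X * f
        + Polynomial.C a1 * D X * D f + Polynomial.C a2 * X * Dk 2 f) X Y f := by
  refine ⟨?_, ?_, ?_⟩
  · intro X Y f
    simp only [Om01, cup]
    ring
  · intro X Y Z f
    simp only [Om01, LD, Lw, br, Dk, D, Function.iterate_succ, Function.iterate_zero,
      Function.comp, id, Polynomial.derivative_mul, Polynomial.derivative_sub,
      Polynomial.derivative_add, map_zero, map_one]
    ring
  · rintro ⟨a0, a1, a2, h⟩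
    have h1 := h Polynomial.X (Polynomial.X ^ 2) 1
    have h2 := congrArg (Polynomial.eval 1) h1
    simp [Om01, cob, LD, Lw, br, Dk, D] at h2
end
end

section
/- For every λ ∈ ℝ define Ω_{λ,λ+2}(X,Y)(f) = (X‴Y′ − X′Y‴)f + 2(X″Y′ − X′Y″)f′. Then Ω_{λ,λ+2} = [[C_{λ,λ+2}, C_{λ,λ}]] = −[[C_{λ+2,λ+2}, C_{λ,λ+2}]]; it is a 2-cocycle on Vect(1) with values in D_{λ,λ+2}; and there exist no α₀, α₁, α₂, α₃ ∈ ℝ such that Ω_{λ,λ+2} = ∂b, where b(X)(f) = α₀X‴f + α₁X″f′ + α₂X′f″ + α₃Xf‴. -/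
noncomputable section

/-- The 2-cocycle `Ω_{λ,λ+2}`. -/
def Om2 (X Y f : P) : P :=
  (Dk 3 X * D Y - D X * Dk 3 Y) * f + 2 * (Dk 2 X * D Y - D X * Dk 2 Y) * D f

/-- `Ω_{λ,λ+2} = [[C_{λ,λ+2},C_{λ,λ}]] = -[[C_{λ+2,λ+2},C_{λ,λ+2}]]` is a
nontrivial 2-cocycle with values in `D_{λ,λ+2}`. -/
theorem Om2_nontrivial_two_cocycle (l : ℝ) :
    (∀ X Y f : P, Om2 X Y f =
      cup (fun X f => Dk 3 X * f + 2 * Dk 2 X * D f) (fun X f => D X * f) X Y f) ∧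
    (∀ X Y f : P, Om2 X Y f =
      - cup (fun X f => D X * f) (fun X f => Dk 3 X * f + 2 * Dk 2 X * D f) X Y f) ∧
    IsCocycle2 l (l + 2) Om2 ∧
    ¬ ∃ a0 a1 a2 a3 : ℝ, ∀ X Y f : P, Om2 X Y f =
      cob l (l + 2) (fun X f => Polynomial.C a0 * Dk 3 X * f
        + Polynomial.C a1 * Dk 2 X * D f + Polynomial.C a2 * D X * Dk 2 f
        + Polynomial.C a3 * X * Dk 3 f) X Y f := by
  refine ⟨?_, ?_, ?_, ?_⟩
  · intro X Y f
    simp only [Om2, cup, Dk, D, Function.iterate_succ, Function.iterate_zero, Function.comp, id,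
      Polynomial.derivative_mul]
    ring
  · intro X Y f
    simp only [Om2, cup, Dk, D, Function.iterate_succ, Function.iterate_zero, Function.comp, id,
      Polynomial.derivative_mul]
    ring
  · intro X Y Z f
    simp only [Om2, LD, Lw, br, Dk, D, Function.iterate_succ, Function.iterate_zero,
      Function.comp, id, Polynomial.derivative_mul, Polynomial.derivative_add,
      Polynomial.derivative_sub, Polynomial.derivative_C, Polynomial.derivative_ofNat,
      Polynomial.C_add, Polynomial.C_ofNat]
    ring
  · rintro ⟨a0, a1, a2, a3, h⟩
    have h1 := congrArg (Polynomial.eval 0) (h (Polynomial.X ^ 3) Polynomial.X 1)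
    have h2 := congrArg (Polynomial.eval 0) (h (Polynomial.X ^ 2) Polynomial.X Polynomial.X)
    simp [Om2, cob, LD, Lw, br, Dk, D, pow_succ] at h1 h2
    ring_nf at h1 h2
    have h3 : a2 = 0 := by linarith
    rw [h3] at h1
    norm_num at h1
end
end

section
/- For every λ ∈ ℝ one has the explicit evaluation [[C_{λ,λ+3}, C_{λ,λ}]](X,Y)(f) = (X‴Y′ − X′Y‴)f′ + (X″Y′ − X′Y″)f″, the identity [[C_{λ,λ+3}, C_{λ,λ}]] = −[[C_{λ+3,λ+3}, C_{λ,λ+3}]], and this bilinear map is a 2-cocycle on Vect(1) with values in D_{λ,λ+3}. -/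
noncomputable section

/-- evaluation of `[[C_{λ,λ+3},C_{λ,λ}]]`, the identity
`[[C_{λ,λ+3},C_{λ,λ}]] = -[[C_{λ+3,λ+3},C_{λ,λ+3}]]`, and the 2-cocycle property. -/
theorem Om3_two_cocycle (l : ℝ) :
    (∀ X Y f : P,
      cup (fun X f => Dk 3 X * D f + Dk 2 X * Dk 2 f) (fun X f => D X * f) X Y f
        = (Dk 3 X * D Y - D X * Dk 3 Y) * D f
          + (Dk 2 X * D Y - D X * Dk 2 Y) * Dk 2 f) ∧
    (∀ X Y f : P,
      cup (fun X f => Dk 3 X * D f + Dk 2 X * Dk 2 f) (fun X f => D X * f) X Y f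
        = - cup (fun X f => D X * f)
            (fun X f => Dk 3 X * D f + Dk 2 X * Dk 2 f) X Y f) ∧
    IsCocycle2 l (l + 3)
      (cup (fun X f => Dk 3 X * D f + Dk 2 X * Dk 2 f) (fun X f => D X * f)) := by
  have h2 : ∀ g : P, Dk 2 g = D (D g) := fun _ => rfl
  have h3 : ∀ g : P, Dk 3 g = D (D (D g)) := fun _ => rfl
  have hm : ∀ a b : P, D (a * b) = D a * b + a * D b := fun a b => by
    simp [D, Polynomial.derivative_mul]
  have ha : ∀ a b : P, D (a + b) = D a + D b := fun a b => by simp [D]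
  have hs : ∀ a b : P, D (a - b) = D a - D b := fun a b => by simp [D]
  have hc : ∀ r : ℝ, D (Polynomial.C r) = 0 := fun r => by simp [D]
  have h0 : D 0 = 0 := by simp [D]
  have h4 : (Polynomial.C (l + 3) : P) = Polynomial.C l + 3 := by
    rw [Polynomial.C_add]; rfl
  refine ⟨fun X Y f => ?_, fun X Y f => ?_, fun X Y Z f => ?_⟩
  · simp only [cup, h2, h3, hm, ha]; ring
  · simp only [cup, h2, h3, hm, ha]; ring
  · simp only [cup, LD, Lw, br, h2, h3, hm, ha, hs, hc, h0, h4]; ring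
end
end

section
/- Let a = −(5±√19)/2 with corresponding constants α = −(22±5√19)/4, β = (31±7√19)/2, γ = (25±7√19)/2 (same choice of sign throughout). Define Ω_{a,a+6}(X,Y)(f) = (X^(5)Y″ + X^(4)Y‴)f′ + 3X^(4)Y″f″ + 2X‴Y″f‴ − (X↔Y) and Ω̃_{a,a+6}(X,Y)(f) = αX^(7)Y′f + βX′Y^(6)f′ + γX′Y^(5)f″ + 5X′Y^(4)f‴ + 5X‴Y′f^(4) + 2X″Y′f^(5) − (X↔Y). Then Ω_{a,a+6} = −[[C_{a+3,a+6}, C_{a,a+3}]] (both factors of the form C(X)(f) = X‴f′ + X″f″, valued in D_{a+3,a+6} and D_{a,a+3}), Ω̃_{a,a+6} = −[[C_{a+6,a+6}, C_{a,a+6}]] (with C_{a+6,a+6}(X)(f) = X′f and C_{a,a+6}(X)(f) = αX^(7)f − βX^(6)f′ − γX^(5)f″ − 5X^(4)f‴ + 5X‴f^(4) + 2X″f^(5)), and both Ω_{a,a+6} and Ω̃_{a,a+6} are 2-cocycles on Vect(1) with values in D_{a,a+6}. -/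
noncomputable section

/-- Half of the 2-cocycle `Ω_{a,a+6}`. -/
def term15a (X Y f : P) : P :=
  (Dk 5 X * Dk 2 Y + Dk 4 X * Dk 3 Y) * D f + 3 * Dk 4 X * Dk 2 Y * Dk 2 f
    + 2 * Dk 3 X * Dk 2 Y * Dk 3 f

/-- Half of the 2-cocycle `Ω̃_{a,a+6}`. -/
def term15b (al be ga : ℝ) (X Y f : P) : P :=
  Polynomial.C al * Dk 7 X * D Y * f + Polynomial.C be * D X * Dk 6 Y * D f
    + Polynomial.C ga * D X * Dk 5 Y * Dk 2 f + 5 * D X * Dk 4 Y * Dk 3 f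
    + 5 * Dk 3 X * D Y * Dk 4 f + 2 * Dk 2 X * D Y * Dk 5 f

/-- The `(λ, λ+3)` one-cochain. -/
def c3 (X f : P) : P := Dk 3 X * D f + Dk 2 X * Dk 2 f

/-- The `(a, a+6)` one-cochain. -/
def c6 (al be ga : ℝ) (X f : P) : P := Polynomial.C al * Dk 7 X * f
            - Polynomial.C be * Dk 6 X * D f
            - Polynomial.C ga * Dk 5 X * Dk 2 f
            - 5 * Dk 4 X * Dk 3 f + 5 * Dk 3 X * Dk 4 f + 2 * Dk 2 X * Dk 5 f

/-- The weight-zero one-cochain. -/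
def c0 (X f : P) : P := D X * f

theorem cup_cocycle (l m n : ℝ) (c₁ c₂ : P → P → P) (h₁ : IsCocycle1 m n c₁)
    (h₂ : IsCocycle1 l m c₂) (hsub : ∀ X f g, c₁ X (f - g) = c₁ X f - c₁ X g) :
    IsCocycle2 l n (fun X Y f => - cup c₁ c₂ X Y f) := by
  intro X Y Z f
  have hL : ∀ X f g, Lw n X (f - g) = Lw n X f - Lw n X g := by
    intro X f g
    simp only [Lw, D, Polynomial.derivative_sub]; ring
  have hN : ∀ X f, Lw n X (-f) = - Lw n X f := by
    intro X f
    simp only [Lw, D, Polynomial.derivative_neg]; ring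
  simp only [IsCocycle1, LD] at h₁ h₂
  simp only [LD, cup, hL, hN, h₁, h₂, hsub]
  abel

theorem c0_cocycle (l : ℝ) : IsCocycle1 l l c0 := by
  intro X Y f
  simp only [c0, LD, Lw, br, D, Polynomial.derivative_sub, Polynomial.derivative_mul,
    Polynomial.derivative_add, Polynomial.derivative_C]
  ring

theorem c3_cocycle (l : ℝ) : IsCocycle1 l (l + 3) c3 := by
  intro X Y f
  simp only [c3, LD, Lw, br, Dk, Function.iterate_succ, Function.iterate_zero,
    Function.comp_apply, id, D, Polynomial.derivative_sub, Polynomial.derivative_mul,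
    Polynomial.derivative_add, Polynomial.derivative_C, map_add, Polynomial.C_ofNat,
    Polynomial.derivative_zero]
  ring

theorem Dk_succ (k : ℕ) (f : P) : Dk (k + 1) f = D (Dk k f) := by
  simp only [Dk, Function.iterate_succ_apply']

theorem D_eq (f : P) : D f = Dk 1 f := rfl

theorem Dk_Dk (j k : ℕ) (f : P) : Dk j (Dk k f) = Dk (j + k) f := by
  simp only [Dk, Function.iterate_add_apply]

theorem D_C_mul (c : ℝ) (f : P) : D (Polynomial.C c * f) = Polynomial.C c * D f := by
  simp only [D, Polynomial.derivative_C_mul]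

theorem D_numerals : D ((2 : P)) = 0 ∧ D ((3 : P)) = 0 ∧ D ((4 : P)) = 0 ∧ D ((5 : P)) = 0 ∧ D ((6 : P)) = 0 ∧ D ((10 : P)) = 0 ∧ D ((15 : P)) = 0 ∧ D ((20 : P)) = 0 :=
  ⟨D_ofNat 2, D_ofNat 3, D_ofNat 4, D_ofNat 5, D_ofNat 6, D_ofNat 10, D_ofNat 15, D_ofNat 20⟩

theorem Dk_add (k : ℕ) (f g : P) : Dk k (f + g) = Dk k f + Dk k g := by
  induction k with
  | zero => rfl
  | succ k ih => simp only [Dk_succ, ih, D_add]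

theorem Dk_sub (k : ℕ) (f g : P) : Dk k (f - g) = Dk k f - Dk k g := by
  induction k with
  | zero => rfl
  | succ k ih => simp only [Dk_succ, ih, D_sub]

theorem Dk_C_mul (k : ℕ) (c : ℝ) (f : P) :
    Dk k (Polynomial.C c * f) = Polynomial.C c * Dk k f := by
  induction k with
  | zero => rfl
  | succ k ih => simp only [Dk_succ, ih, D_C_mul]

theorem leib1 (f g : P) : Dk 1 (f * g) =
    (Dk 1 f * g) + (f * Dk 1 g) := by
  exact D_mul f g

theorem leib2 (f g : P) : Dk 2 (f * g) =
    (Dk 2 f * g) + 2 * (Dk 1 f * Dk 1 g) + (f * Dk 2 g) := by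
  rw [Dk_succ 1, leib1]
  simp only [D_add, D_mul, D_numerals]
  simp only [D_eq, Dk_Dk, Nat.reduceAdd]
  ring

theorem leib3 (f g : P) : Dk 3 (f * g) =
    (Dk 3 f * g) + 3 * (Dk 2 f * Dk 1 g) + 3 * (Dk 1 f * Dk 2 g) + (f * Dk 3 g) := by
  rw [Dk_succ 2, leib2]
  simp only [D_add, D_mul, D_numerals]
  simp only [D_eq, Dk_Dk, Nat.reduceAdd]
  ring

theorem leib4 (f g : P) : Dk 4 (f * g) =
    (Dk 4 f * g) + 4 * (Dk 3 f * Dk 1 g) + 6 * (Dk 2 f * Dk 2 g) + 4 * (Dk 1 f * Dk 3 g) + (f * Dk 4 g) := by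
  rw [Dk_succ 3, leib3]
  simp only [D_add, D_mul, D_numerals]
  simp only [D_eq, Dk_Dk, Nat.reduceAdd]
  ring

theorem leib5 (f g : P) : Dk 5 (f * g) =
    (Dk 5 f * g) + 5 * (Dk 4 f * Dk 1 g) + 10 * (Dk 3 f * Dk 2 g) + 10 * (Dk 2 f * Dk 3 g) + 5 * (Dk 1 f * Dk 4 g) + (f * Dk 5 g) := by
  rw [Dk_succ 4, leib4]
  simp only [D_add, D_mul, D_numerals]
  simp only [D_eq, Dk_Dk, Nat.reduceAdd]
  ring

theorem leib6 (f g : P) : Dk 6 (f * g) =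
    (Dk 6 f * g) + 6 * (Dk 5 f * Dk 1 g) + 15 * (Dk 4 f * Dk 2 g) + 20 * (Dk 3 f * Dk 3 g) + 15 * (Dk 2 f * Dk 4 g) + 6 * (Dk 1 f * Dk 5 g) + (f * Dk 6 g) := by
  rw [Dk_succ 5, leib5]
  simp only [D_add, D_mul, D_numerals]
  simp only [D_eq, Dk_Dk, Nat.reduceAdd]
  ring

theorem leib7 (f g : P) : Dk 7 (f * g) =
    (Dk 7 f * g) + 7 * (Dk 6 f * Dk 1 g) + 21 * (Dk 5 f * Dk 2 g) + 35 * (Dk 4 f * Dk 3 g) + 35 * (Dk 3 f * Dk 4 g) + 21 * (Dk 2 f * Dk 5 g) + 7 * (Dk 1 f * Dk 6 g) + (f * Dk 7 g) := by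
  rw [Dk_succ 6, leib6]
  simp only [D_add, D_mul, D_numerals]
  simp only [D_eq, Dk_Dk, Nat.reduceAdd]
  ring

theorem Lw_eq (l : ℝ) (X f : P) :
    Lw l X f = X * Dk 1 f + Polynomial.C l * (Dk 1 X * f) := by
  simp only [Lw, D_eq]; ring

theorem c6_eq (al be ga : ℝ) (X f : P) : c6 al be ga X f = Polynomial.C al * (Dk 7 X * f)
            - Polynomial.C be * (Dk 6 X * Dk 1 f)
            - Polynomial.C ga * (Dk 5 X * Dk 2 f)
            - 5 * (Dk 4 X * Dk 3 f) + 5 * (Dk 3 X * Dk 4 f) + 2 * (Dk 2 X * Dk 5 f) := by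
  simp only [c6, D_eq]; ring

theorem Dk1_two : Dk 1 (2 : P) = 0 := D_ofNat 2

theorem Dk1_five : Dk 1 (5 : P) = 0 := D_ofNat 5

theorem c6_cocycle (s : ℝ) (hs : s ^ 2 = 19) :
    IsCocycle1 (-(5 + s) / 2) (-(5 + s) / 2 + 6)
      (c6 (-(22 + 5 * s) / 4) ((31 + 7 * s) / 2) ((25 + 7 * s) / 2)) := by
  intro X Y f
  simp only [c6_eq, LD, Lw_eq, br, D_eq, Dk_add, Dk_sub, Dk_C_mul, Dk1_two, Dk1_five, zero_mul, zero_add,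
    leib1, leib2, leib3, leib4, leib5, leib6, leib7, Dk_Dk, Nat.reduceAdd]
  apply Polynomial.funext
  intro x
  simp only [Polynomial.eval_zero, Polynomial.eval_add, Polynomial.eval_sub, Polynomial.eval_mul, Polynomial.eval_C,
    Polynomial.eval_ofNat]
  generalize Polynomial.eval x X = X0
  generalize Polynomial.eval x (Dk 1 X) = X1
  generalize Polynomial.eval x (Dk 2 X) = X2
  generalize Polynomial.eval x (Dk 3 X) = X3
  generalize Polynomial.eval x (Dk 4 X) = X4
  generalize Polynomial.eval x (Dk 5 X) = X5
  generalize Polynomial.eval x (Dk 6 X) = X6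
  generalize Polynomial.eval x (Dk 7 X) = X7
  generalize Polynomial.eval x (Dk 8 X) = X8
  generalize Polynomial.eval x (Dk 9 X) = X9
  generalize Polynomial.eval x Y = Y0
  generalize Polynomial.eval x (Dk 1 Y) = Y1
  generalize Polynomial.eval x (Dk 2 Y) = Y2
  generalize Polynomial.eval x (Dk 3 Y) = Y3
  generalize Polynomial.eval x (Dk 4 Y) = Y4
  generalize Polynomial.eval x (Dk 5 Y) = Y5
  generalize Polynomial.eval x (Dk 6 Y) = Y6
  generalize Polynomial.eval x (Dk 7 Y) = Y7
  generalize Polynomial.eval x (Dk 8 Y) = Y8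
  generalize Polynomial.eval x (Dk 9 Y) = Y9
  generalize Polynomial.eval x f = f0
  generalize Polynomial.eval x (Dk 1 f) = f1
  generalize Polynomial.eval x (Dk 2 f) = f2
  generalize Polynomial.eval x (Dk 3 f) = f3
  generalize Polynomial.eval x (Dk 4 f) = f4
  generalize Polynomial.eval x (Dk 5 f) = f5
  generalize Polynomial.eval x (Dk 6 f) = f6
  generalize Polynomial.eval x (Dk 7 f) = f7
  rw [← sub_eq_zero]
  ring_nf
  simp only [hs]
  ring

/-- for `a = -(5±√19)/2`, the maps `Ω_{a,a+6} = -[[C_{a+3,a+6},C_{a,a+3}]]`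
and `Ω̃_{a,a+6} = -[[C_{a+6,a+6},C_{a,a+6}]]` are 2-cocycles with values in `D_{a,a+6}`. -/
theorem Om6_two_cocycles (s : ℝ)
    (hs : s = Real.sqrt 19 ∨ s = -Real.sqrt 19) :
    (∀ X Y f : P, term15a X Y f - term15a Y X f =
      - cup (fun X f => Dk 3 X * D f + Dk 2 X * Dk 2 f)
          (fun X f => Dk 3 X * D f + Dk 2 X * Dk 2 f) X Y f) ∧
    (∀ X Y f : P,
      term15b (-(22 + 5 * s) / 4) ((31 + 7 * s) / 2) ((25 + 7 * s) / 2) X Y f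
        - term15b (-(22 + 5 * s) / 4) ((31 + 7 * s) / 2) ((25 + 7 * s) / 2) Y X f =
      - cup (fun X f => D X * f)
          (fun X f => Polynomial.C (-(22 + 5 * s) / 4) * Dk 7 X * f
            - Polynomial.C ((31 + 7 * s) / 2) * Dk 6 X * D f
            - Polynomial.C ((25 + 7 * s) / 2) * Dk 5 X * Dk 2 f
            - 5 * Dk 4 X * Dk 3 f + 5 * Dk 3 X * Dk 4 f + 2 * Dk 2 X * Dk 5 f) X Y f) ∧
    IsCocycle2 (-(5 + s) / 2) (-(5 + s) / 2 + 6)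
      (fun X Y f => term15a X Y f - term15a Y X f) ∧
    IsCocycle2 (-(5 + s) / 2) (-(5 + s) / 2 + 6)
      (fun X Y f =>
        term15b (-(22 + 5 * s) / 4) ((31 + 7 * s) / 2) ((25 + 7 * s) / 2) X Y f
          - term15b (-(22 + 5 * s) / 4) ((31 + 7 * s) / 2) ((25 + 7 * s) / 2) Y X f) := by
  have hs2 : s ^ 2 = 19 := by
    rcases hs with rfl | rfl
    · exact Real.sq_sqrt (by norm_num)
    · rw [neg_sq]; exact Real.sq_sqrt (by norm_num)
  have e1 : ∀ X Y f : P, term15a X Y f - term15a Y X f = - cup c3 c3 X Y f := by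
    intro X Y f
    simp only [term15a, cup, c3, Dk, Function.iterate_succ, Function.iterate_zero,
      Function.comp_apply, id, D, Polynomial.derivative_mul, Polynomial.derivative_add]
    ring
  have e2 : ∀ (al be ga : ℝ) (X Y f : P), term15b al be ga X Y f - term15b al be ga Y X f
      = - cup c0 (c6 al be ga) X Y f := by
    intro al be ga X Y f
    simp only [term15b, cup, c0, c6]
    ring
  refine ⟨e1, e2 _ _ _, ?_, ?_⟩
  · simp only [e1]
    have h := cup_cocycle (-(5 + s) / 2) (-(5 + s) / 2 + 3) (-(5 + s) / 2 + 3 + 3) c3 c3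
      (c3_cocycle _) (c3_cocycle _) (by
        intro X f g
        simp only [c3, Dk, Function.iterate_succ, Function.iterate_zero,
          Function.comp_apply, id, D, Polynomial.derivative_sub]
        ring)
    have e : -(5 + s) / 2 + 3 + 3 = -(5 + s) / 2 + 6 := by ring
    rwa [e] at h
  · simp only [e2]
    exact cup_cocycle _ _ _ c0 _ (c0_cocycle _) (c6_cocycle s hs2) (by
      intro X f g
      simp only [c0]
      ring)
end
end

section
/- For every λ ∈ ℝ, the cup product [[C_{λ+2,λ+4}, C_{λ,λ+2}]] (with C_{λ+2,λ+4}(X)(f) = X‴f + 2X″f′ valued in D_{λ+2,λ+4} and C_{λ,λ+2}(X)(f) = X‴f + 2X″f′ valued in D_{λ,λ+2}) is a 2-coboundary with values in D_{λ,λ+4}: there exist constants c₁, c₂ ∈ ℝ (one may take (c₁,c₂) = ±((2/5)(λ−1), −2)) such that [[C_{λ+2,λ+4}, C_{λ,λ+2}]] = ∂b for the 1-cochain b(X)(f) = c₁X^(5)f + c₂X^(4)f′, where ∂ is taken with ν = λ, μ = λ+4. -/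
noncomputable section

/-- `[[C_{λ+2,λ+4},C_{λ,λ+2}]]` is a 2-coboundary with values in
`D_{λ,λ+4}`, with 1-cochain `b(X)(f) = c₁X^(5)f + c₂X^(4)f′` where
`(c₁,c₂) = ±((2/5)(λ-1), -2)`. -/
theorem cup_order_four_is_coboundary (l : ℝ) :
    ∃ c1 c2 : ℝ,
      ((c1 = 2 / 5 * (l - 1) ∧ c2 = -2) ∨ (c1 = -(2 / 5 * (l - 1)) ∧ c2 = 2)) ∧
      ∀ X Y f : P,
        cup (fun X f => Dk 3 X * f + 2 * Dk 2 X * D f)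
            (fun X f => Dk 3 X * f + 2 * Dk 2 X * D f) X Y f
          = cob l (l + 4)
              (fun X f => Polynomial.C c1 * Dk 5 X * f + Polynomial.C c2 * Dk 4 X * D f)
              X Y f := by
  refine ⟨2 / 5 * (l - 1), -2, Or.inl ⟨rfl, rfl⟩, ?_⟩
  intro X Y f
  obtain ⟨c, hc⟩ : ∃ c : ℝ, c = 2 / 5 * (l - 1) := ⟨_, rfl⟩
  have hl : l = 5 / 2 * c + 1 := by rw [hc]; ring
  rw [← hc]
  have e2 : Polynomial.C (2 : ℝ) = (2 : P) := map_ofNat _ 2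
  have e4 : Polynomial.C (4 : ℝ) = (4 : P) := map_ofNat _ 4
  have e5 : Polynomial.C (5 : ℝ) = (5 : P) := map_ofNat _ 5
  have h2 : (Polynomial.C (-2 : ℝ)) = (-2 : P) := by rw [Polynomial.C_neg, e2]
  have h4 : Polynomial.C (l + 4) = Polynomial.C l + (4 : P) := by rw [Polynomial.C_add, e4]
  have h5 : 2 * Polynomial.C l = 5 * Polynomial.C c + (2 : P) := by
    have : (2 : ℝ) * l = 5 * c + 2 := by rw [hl]; ring
    have h := congrArg (Polynomial.C (R := ℝ)) this
    simpa only [Polynomial.C_add, Polynomial.C_mul, e2, e5] using h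
  simp only [cup, cob, LD, Lw, br, Dk, D, Function.iterate_succ, Function.iterate_zero,
    Function.comp, id, h2, h4, Polynomial.derivative_add, Polynomial.derivative_sub,
    Polynomial.derivative_mul, Polynomial.derivative_C, Polynomial.derivative_ofNat,
    Polynomial.derivative_neg, Polynomial.derivative_zero]
  generalize Polynomial.C l = L at *
  generalize Polynomial.C c = K at *
  set x2 := Polynomial.derivative (Polynomial.derivative X)
  set y2 := Polynomial.derivative (Polynomial.derivative Y)
  set x4 := Polynomial.derivative (Polynomial.derivative x2)
  set y4 := Polynomial.derivative (Polynomial.derivative y2)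
  linear_combination (-(x2 * y4 - y2 * x4) * f) * h5
end
end

section
/- (Deformations of the space of symbols S²₃ = F₁ ⊕ F₂ ⊕ F₃.) On triples (f₁,f₂,f₃) of polynomials, let L_X(f₁,f₂,f₃) = (L_X¹f₁, L_X²f₂, L_X³f₃), and define the operators C_{1,1}(X)(f₁,f₂,f₃) = (X′f₁,0,0), C_{2,2}(X)(f₁,f₂,f₃) = (0,X′f₂,0), C_{3,3}(X)(f₁,f₂,f₃) = (0,0,X′f₃), and C_{1,3}(X)(f₁,f₂,f₃) = (0,0,X‴f₁ + 2X″f₁′). Then for all real parameters t₁, t₂, t₃, each of the two maps ℒ_X = L_X + t₁(C_{1,1}(X) + C_{3,3}(X)) + t₂C_{2,2}(X) + t₃C_{1,3}(X) and ℒ_X = L_X + t₁C_{1,1}(X) + t₂C_{2,2}(X) + t₃C_{3,3}(X) defines a Vect(1)-action: ℒ_{[X,Y]} = ℒ_X ∘ ℒ_Y − ℒ_Y ∘ ℒ_X for all X, Y ∈ ℝ[x]. -/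
noncomputable section

/-- The space of symbols `S²₃ = F₁ ⊕ F₂ ⊕ F₃`, as triples of polynomials. -/
abbrev V3 : Type := P × P × P

/-- The Lie derivative on `S²₃`. -/
def L3 (X : P) (v : V3) : V3 := (Lw 1 X v.1, Lw 2 X v.2.1, Lw 3 X v.2.2)

def C11' (X : P) (v : V3) : V3 := (D X * v.1, 0, 0)
def C22' (X : P) (v : V3) : V3 := (0, D X * v.2.1, 0)
def C33' (X : P) (v : V3) : V3 := (0, 0, D X * v.2.2)
def C13' (X : P) (v : V3) : V3 := (0, 0, Dk 3 X * v.1 + 2 * Dk 2 X * D v.1)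

/-- First deformation of the action on `S²₃`. -/
def LLa (t1 t2 t3 : ℝ) (X : P) (v : V3) : V3 :=
  L3 X v + t1 • (C11' X v + C33' X v) + t2 • C22' X v + t3 • C13' X v

/-- Second deformation of the action on `S²₃`. -/
def LLb (t1 t2 t3 : ℝ) (X : P) (v : V3) : V3 :=
  L3 X v + t1 • C11' X v + t2 • C22' X v + t3 • C33' X v

/-- both deformations define Vect(1)-actions on `S²₃` for all parameters. -/
theorem deformations_of_S23 (t1 t2 t3 : ℝ) :
    (∀ X Y : P, ∀ v : V3,
      LLa t1 t2 t3 (br X Y) v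
        = LLa t1 t2 t3 X (LLa t1 t2 t3 Y v) - LLa t1 t2 t3 Y (LLa t1 t2 t3 X v)) ∧
    (∀ X Y : P, ∀ v : V3,
      LLb t1 t2 t3 (br X Y) v
        = LLb t1 t2 t3 X (LLb t1 t2 t3 Y v) - LLb t1 t2 t3 Y (LLb t1 t2 t3 X v)) := by
  have h3 : (Polynomial.C (3:ℝ) : P) = 3 := rfl
  constructor
  · rintro X Y ⟨f, g, h⟩
    refine Prod.ext ?_ (Prod.ext ?_ ?_) <;>
    · simp [LLa, L3, C11', C22', C33', C13', Lw, br, Dk, D, h3, Polynomial.smul_eq_C_mul]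
      ring
  · rintro X Y ⟨f, g, h⟩
    refine Prod.ext ?_ (Prod.ext ?_ ?_) <;>
    · simp [LLb, L3, C11', C22', C33', Lw, br, D, Polynomial.smul_eq_C_mul]
      ring
end
end
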